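/- Let n be a squarefree positive integer all of whose prime factors are congruent to 1 modulo 8, and assume h_4(n) = 1. For each prime p dividing n, choose positive integers x_p, y_p with p = x_p² − 32·y_p², and set δ_p = 1 if x_p ≡ 3 (mod 4) and δ_p = 0 otherwise. Then Σ_{p | n} δ_p is odd if and only if h_8(n) = 0. -/

import Mathlib

open NumberField

theorem rat_int_of_sq (n : ℕ) (hnsf : Squarefree n) (q : ℚ) (m : ℤ) (h : (n : ℚ) * q ^ 2 = m) :
    ∃ k : ℤ, q = k := by
  have hd : (q.den : ℚ) ≠ 0 := by exact_mod_cast q.den_ne_zero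
  have h1 : (n : ℤ) * q.num ^ 2 = m * (q.den : ℤ) ^ 2 := by
    have : (n : ℚ) * (q.num : ℚ) ^ 2 = m * (q.den : ℚ) ^ 2 := by
      rw [← h]
      have hq : q * q.den = q.num := Rat.mul_den_eq_num q
      rw [← hq]; ring
    exact_mod_cast this
  have h2 : (q.den : ℤ) ^ 2 ∣ (n : ℤ) := by
    have hc : IsCoprime ((q.den : ℤ) ^ 2) (q.num ^ 2) := by
      apply IsCoprime.pow
      rw [Int.isCoprime_iff_gcd_eq_one]
      have := q.reduced
      rw [Int.gcd_comm]
      simpa [Int.gcd] using this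
    exact hc.dvd_of_dvd_mul_right ⟨m, by rw [h1]; ring⟩
  have h3 : q.den * q.den ∣ n := by
    have : (((q.den * q.den : ℕ)) : ℤ) ∣ (n : ℤ) := by push_cast; rw [← sq]; exact h2
    exact_mod_cast this
  have h4 := hnsf _ h3
  rw [Nat.isUnit_iff] at h4
  exact ⟨q.num, by rw [Rat.coe_int_num_of_den_eq_one h4]⟩

section coords
variable {K : Type} [Field K] [NumberField K]

theorem exists_basis (hdeg : Module.finrank ℚ K = 2) (n : ℕ) (hnpos : 0 < n)
    (s : K) (hs : s ^ 2 = -(n : K)) :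
    ∃ B : Module.Basis (Fin 2) ℚ K, B 0 = 1 ∧ B 1 = s := by
  have hli : LinearIndependent ℚ ![(1 : K), s] := by
    rw [LinearIndependent.pair_iff]
    intro a b hab
    have hb : b = 0 := by
      by_contra hb
      have h1 : s = ((-a / b : ℚ) : K) := by
        have hb' : (b : K) ≠ 0 := by exact_mod_cast hb
        rw [Algebra.smul_def, Algebra.smul_def] at hab
        simp only [eq_ratCast, mul_one] at hab
        push_cast
        field_simp
        linear_combination hab
      have h2 : ((-a / b : ℚ)) ^ 2 = -(n : ℚ) := by
        rw [h1] at hs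
        exact_mod_cast hs
      have : (0 : ℚ) < n := by exact_mod_cast hnpos
      nlinarith [sq_nonneg (-a / b)]
    subst hb
    simpa using hab
  refine ⟨basisOfLinearIndependentOfCardEqFinrank hli (by simp [hdeg]), ?_, ?_⟩ <;> simp

theorem leftMul (n : ℕ) (s : K) (hs : s ^ 2 = -(n : K)) (B : Module.Basis (Fin 2) ℚ K)
    (h0 : B 0 = 1) (h1 : B 1 = s) (a b : ℚ) :
    Algebra.leftMulMatrix B ((a : K) + b * s) = !![a, -(n * b); b, a] := by
  have hr : ∀ c d : ℚ, B.repr ((c : K) + d * s) = Finsupp.single 0 c + Finsupp.single 1 d := by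
    intro c d
    have : (c : K) + d * s = c • B 0 + d • B 1 := by
      rw [h0, h1, Algebra.smul_def, Algebra.smul_def]; simp
    rw [this, map_add, map_smul, map_smul, B.repr_self, B.repr_self]
    simp
  have e1 : ((a : K) + b * s) * s = ((-(n * b) : ℚ) : K) + (a : ℚ) * s := by
    push_cast
    linear_combination (b : K) * hs
  ext i j
  rw [Algebra.leftMulMatrix_eq_repr_mul]
  fin_cases j
  · simp only [Fin.zero_eta, h0, mul_one, hr]
    fin_cases i <;> simp
  · simp only [Fin.mk_one, h1, e1, hr]
    fin_cases i <;> simp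

theorem coord_norm (hdeg : Module.finrank ℚ K = 2) (n : ℕ) (hnpos : 0 < n)
    (s : K) (hs : s ^ 2 = -(n : K)) (a b : ℚ) :
    Algebra.norm ℚ ((a : K) + b * s) = a ^ 2 + n * b ^ 2 := by
  obtain ⟨B, h0, h1⟩ := exists_basis hdeg n hnpos s hs
  rw [Algebra.norm_eq_matrix_det B, leftMul n s hs B h0 h1, Matrix.det_fin_two]
  simp; ring

theorem coord_trace (hdeg : Module.finrank ℚ K = 2) (n : ℕ) (hnpos : 0 < n)
    (s : K) (hs : s ^ 2 = -(n : K)) (a b : ℚ) :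
    Algebra.trace ℚ K ((a : K) + b * s) = 2 * a := by
  obtain ⟨B, h0, h1⟩ := exists_basis hdeg n hnpos s hs
  rw [Algebra.trace_eq_matrix_trace B, leftMul n s hs B h0 h1, Matrix.trace_fin_two]
  simp; ring

theorem coord_exists (hdeg : Module.finrank ℚ K = 2) (n : ℕ) (hnpos : 0 < n)
    (s : K) (hs : s ^ 2 = -(n : K)) (x : K) : ∃ a b : ℚ, x = (a : K) + b * s := by
  obtain ⟨B, h0, h1⟩ := exists_basis hdeg n hnpos s hs
  refine ⟨B.repr x 0, B.repr x 1, ?_⟩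
  conv_lhs => rw [← B.sum_repr x]
  rw [Fin.sum_univ_two, h0, h1, Algebra.smul_def, Algebra.smul_def]
  simp

theorem coord_int (hdeg : Module.finrank ℚ K = 2) (n : ℕ) (hnpos : 0 < n) (hnsf : Squarefree n)
    (hn8 : n % 8 = 1)
    (s : K) (hs : s ^ 2 = -(n : K)) (w : 𝓞 K) (hw : algebraMap (𝓞 K) K w = s) (α : 𝓞 K) :
    ∃ x y : ℤ, α = x + y * w := by
  obtain ⟨a, b, hab⟩ := coord_exists hdeg n hnpos s hs (algebraMap (𝓞 K) K α)
  have hint : IsIntegral ℤ (algebraMap (𝓞 K) K α) := α.isIntegral_coe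
  obtain ⟨A, hA⟩ := IsIntegrallyClosed.isIntegral_iff.mp (Algebra.isIntegral_trace (L := ℚ) hint)
  obtain ⟨N, hN⟩ := IsIntegrallyClosed.isIntegral_iff.mp (Algebra.isIntegral_norm ℚ hint)
  rw [hab, coord_trace hdeg n hnpos s hs] at hA
  rw [hab, coord_norm hdeg n hnpos s hs] at hN
  simp only [algebraMap_int_eq, eq_intCast] at hA hN
  obtain ⟨C, hC⟩ := rat_int_of_sq n hnsf (2 * b) (4 * N - A ^ 2) (by push_cast; rw [hN, hA]; ring)
  have hZ : A ^ 2 + n * C ^ 2 = 4 * N := by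
    have : (A : ℚ) ^ 2 + n * (C : ℚ) ^ 2 = 4 * N := by rw [← hC, hA, hN]; ring
    exact_mod_cast this
  have hpar : A % 2 = 0 ∧ C % 2 = 0 := by
    obtain ⟨m, hm⟩ : ∃ m : ℤ, (n : ℤ) = 8 * m + 1 := ⟨n / 8, by omega⟩
    rw [hm] at hZ
    rcases Int.even_or_odd' A with ⟨u, rfl | rfl⟩ <;> rcases Int.even_or_odd' C with ⟨v, rfl | rfl⟩
    · omega
    all_goals exfalso; ring_nf at hZ; omega
  obtain ⟨u, hu⟩ : ∃ u, A = 2 * u := ⟨A / 2, by omega⟩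
  obtain ⟨v, hv⟩ : ∃ v, C = 2 * v := ⟨C / 2, by omega⟩
  refine ⟨u, v, ?_⟩
  apply RingOfIntegers.coe_injective
  have ha : a = u := by rw [hu] at hA; push_cast at hA; linarith
  have hb : b = v := by rw [hv] at hC; push_cast at hC; linarith
  rw [hab, ha, hb, map_add, map_mul, hw]
  simp

theorem norm_int (hdeg : Module.finrank ℚ K = 2) (n : ℕ) (hnpos : 0 < n)
    (s : K) (hs : s ^ 2 = -(n : K)) (w : 𝓞 K) (hw : algebraMap (𝓞 K) K w = s) (x y : ℤ) :
    Algebra.norm ℤ ((x : 𝓞 K) + y * w) = x ^ 2 + n * y ^ 2 := by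
  have h := Algebra.coe_norm_int (K := K) ((x : 𝓞 K) + y * w)
  have h2 := coord_norm hdeg n hnpos s hs (x : ℚ) (y : ℚ)
  have h3 : algebraMap (𝓞 K) K ((x : 𝓞 K) + y * w) = ((x : ℚ) : K) + ((y : ℚ) : K) * s := by
    rw [map_add, map_mul, hw]; simp
  rw [← h3] at h2
  have h4 := h.trans h2
  exact_mod_cast h4

theorem absNorm_int (hdeg : Module.finrank ℚ K = 2) (n : ℕ) (hnpos : 0 < n)
    (s : K) (hs : s ^ 2 = -(n : K)) (w : 𝓞 K) (hw : algebraMap (𝓞 K) K w = s) (x y : ℤ) :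
    (Ideal.absNorm (Ideal.span {(x : 𝓞 K) + y * w}) : ℤ) = x ^ 2 + n * y ^ 2 := by
  rw [Ideal.absNorm_span_singleton, norm_int hdeg n hnpos s hs w hw]
  rw [Int.natAbs_of_nonneg]
  positivity

end coords

theorem grp_lemma {G : Type*} [CommGroup G] [Finite G]
    (h4 : Nat.card {c : G // c ^ 2 = 1 ∧ ∃ b, c = b ^ 2} = 2)
    (H : Subgroup G) (hH : H ≠ ⊤) (hsq : ∀ g : G, g ^ 2 ∈ H) (htor : ∀ g : G, g ^ 2 = 1 → g ∈ H)
    (t b : G) (ht : t ≠ 1) (ht2 : t ^ 2 = 1) (hb : t = b ^ 2) :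
    Nat.card {c : G // c ^ 2 = 1 ∧ ∃ b, c = b ^ 4} = 1 ↔ b ∉ H := by
  constructor
  · intro hc hbH
    set f : G →* G := powMonoidHom 2 with hf
    set Q := f.range with hQ
    have hL : (Q.map f).comap f ≤ H := by
      rw [Subgroup.comap_map_eq]
      refine sup_le ?_ ?_
      · rintro _ ⟨g, rfl⟩; exact hsq g
      · intro g hg; exact htor g hg
    set g : Q →* G := f.comp Q.subtype with hg
    have hgr : g.range = Q.map f := by
      rw [hg, MonoidHom.range_comp, Subgroup.range_subtype]
    have hk : Nat.card g.ker = 2 := by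
      rw [← h4]
      refine Nat.card_congr ⟨fun x => ⟨x.1.1, x.2, ?_⟩, fun c => ⟨⟨c.1, ?_⟩, c.2.1⟩, fun _ => rfl, fun _ => rfl⟩
      · obtain ⟨y, hy⟩ := x.1.2; exact ⟨y, hy.symm⟩
      · obtain ⟨y, hy⟩ := c.2.2; exact ⟨y, hy.symm⟩
    have hcard : 2 * Nat.card (Q.map f) = Nat.card Q := by
      rw [← hk, ← hgr, ← Subgroup.index_ker, Subgroup.card_mul_index]
    have hle : Q.map f ≤ Q := by
      rintro _ ⟨y, -, rfl⟩; exact ⟨y, rfl⟩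
    have hidx : ((Q.map f).comap f).index = 2 := by
      rw [Subgroup.index_comap]
      have h1 : Nat.card (Q.map f) * (Q.map f).relIndex Q = Nat.card Q := by
        have := Subgroup.relIndex_mul_relIndex ⊥ (Q.map f) Q bot_le hle
        simpa [Subgroup.relIndex_bot_left] using this
      have h2 : 0 < Nat.card (Q.map f) := Nat.card_pos
      rw [← hcard, mul_comm 2] at h1
      exact Nat.eq_of_mul_eq_mul_left h2 h1
    have hmul := Subgroup.relIndex_mul_index hL
    rw [hidx] at hmul
    have hH1 : H.index ≠ 1 := fun h => hH (Subgroup.index_eq_one.mp h)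
    have hr1 : ((Q.map f).comap f).relIndex H = 1 := by
      rcases (Nat.dvd_prime Nat.prime_two).mp ⟨_, hmul.symm⟩ with h | h
      · exact h
      · rw [h] at hmul; omega
    have hbL : b ∈ (Q.map f).comap f := Subgroup.relIndex_eq_one.mp hr1 hbH
    obtain ⟨_, ⟨e, rfl⟩, he⟩ := hbL
    have hte : t = e ^ 4 := by
      rw [hb]; 
      have : (e ^ 2) ^ 2 = b ^ 2 := he
      rw [← this, ← pow_mul]
    have hsub := (Nat.card_eq_one_iff_unique.mp hc).1
    have := hsub.elim ⟨t, ht2, e, hte⟩ ⟨1, one_pow 2, 1, (one_pow 4).symm⟩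
    exact ht (congrArg Subtype.val this)
  · intro hbH
    rw [Nat.card_eq_one_iff_unique]
    refine ⟨⟨?_⟩, ⟨⟨1, one_pow 2, 1, (one_pow 4).symm⟩⟩⟩
    suffices h : ∀ c : G, c ^ 2 = 1 → ∀ e, c = e ^ 4 → c = 1 by
      rintro ⟨c, hc, e, he⟩ ⟨c', hc', e', he'⟩
      exact Subtype.ext ((h c hc e he).trans (h c' hc' e' he').symm)
    intro c hc e he
    by_contra hc1
    have hct : c = t := by
      by_contra hct
      obtain ⟨u, v, huv, hall⟩ := Nat.card_eq_two_iff.mp h4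
      have key : ∀ z : {c : G // c ^ 2 = 1 ∧ ∃ b, c = b ^ 2}, z = u ∨ z = v := by
        intro z
        have : z ∈ ({u, v} : Set _) := by rw [hall]; trivial
        simpa using this
      have a1 := key ⟨1, one_pow 2, 1, (one_pow 2).symm⟩
      have a2 := key ⟨t, ht2, b, hb⟩
      have a3 := key ⟨c, hc, e ^ 2, by rw [he, ← pow_mul]⟩
      simp only [Subtype.ext_iff] at a1 a2 a3
      rcases a1 with a1 | a1 <;> rcases a2 with a2 | a2 <;> rcases a3 with a3 | a3 <;>
        simp_all
    apply hbH
    have h1 : (b * (e ^ 2)⁻¹) ^ 2 = 1 := by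
      rw [mul_pow, inv_pow, ← pow_mul, ← hb, ← hct, he]; simp
    have := H.mul_mem (htor _ h1) (hsq e)
    simpa using this

theorem prod_mod8 (d : ℕ) (hd0 : d ≠ 0) (h : ∀ q : ℕ, q.Prime → q ∣ d → q % 8 = 1) : d % 8 = 1 := by
  induction d using induction_on_primes with
  | zero => omega
  | one => rfl
  | prime_mul p a hp ih =>
    have ha : a ≠ 0 := by rintro rfl; simp at hd0
    have h1 := h p hp (dvd_mul_right _ _)
    have h2 := ih ha (fun q hq hqa => h q hq (hqa.mul_left _))
    rw [Nat.mul_mod, h1, h2]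

theorem sqpart (n : ℕ) (hpf : ∀ q : ℕ, q.Prime → q ∣ n → q % 8 = 1) (A B w : ℕ)
    (hA : A ≠ 0) (hn : n ≠ 0) (hw : w ≠ 0) (hcop : Nat.Coprime A B) (h : A * B = n * w ^ 2) :
    ∃ d a, A = d * a ^ 2 ∧ d % 8 = 1 := by
  obtain ⟨d, a, hda, hd⟩ := Nat.sq_mul_squarefree A
  refine ⟨d, a, by rw [← hda]; ring, ?_⟩
  have hd0 : d ≠ 0 := hd.ne_zero
  apply prod_mod8 d hd0
  intro q hq hqd
  apply hpf q hq
  by_contra hqn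
  have hqA : q ∣ A := by rw [← hda]; exact hqd.mul_left _
  have hqB : ¬ q ∣ B := fun hqB => hq.one_lt.ne' (Nat.eq_one_of_dvd_coprimes hcop hqA hqB)
  have hB : B ≠ 0 := by rintro rfl; simp at hqB
  have ha : a ≠ 0 := by rintro rfl; simp at hda; omega
  have h1 : (A * B).factorization q = (n * w ^ 2).factorization q := by rw [h]
  rw [Nat.factorization_mul hA hB, Nat.factorization_mul hn (pow_ne_zero _ hw), ← hda,
    Nat.factorization_mul (pow_ne_zero _ ha) hd0] at h1
  simp only [Finsupp.add_apply, Nat.factorization_pow, Finsupp.smul_apply, smul_eq_mul] at h1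
  rw [Nat.factorization_eq_zero_of_not_dvd hqB, Nat.factorization_eq_zero_of_not_dvd hqn] at h1
  have h2 := hd.natFactorization_le_one q
  have h3 : 0 < d.factorization q := hq.factorization_pos_of_dvd hd0 hqd
  omega

theorem sqpart_mod (n : ℕ) (hpf : ∀ q : ℕ, q.Prime → q ∣ n → q % 8 = 1) (A B w : ℤ)
    (hA : 0 < A) (hB : 0 < B) (hn : n ≠ 0) (hcop : IsCoprime A B) (h : A * B = n * w ^ 2) :
    ∃ a : ℤ, A % 8 = (a ^ 2) % 8 := by
  lift A to ℕ using hA.le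
  lift B to ℕ using hB.le
  have hw : w ≠ 0 := by rintro rfl; simp at h; omega
  have h' : A * B = n * w.natAbs ^ 2 := by
    zify; rw [sq_abs]; exact h
  obtain ⟨d, a, h1, h2⟩ := sqpart n hpf A B w.natAbs (by omega) hn (by simpa using hw)
    (Nat.isCoprime_iff_coprime.mp hcop) h'
  refine ⟨a, ?_⟩
  rw [h1]
  push_cast
  rw [Int.mul_emod, show (d : ℤ) % 8 = 1 by omega]
  simp

theorem sq_mod8 (a : ℤ) : (a ^ 2) % 8 = 0 ∨ (a ^ 2) % 8 = 1 ∨ (a ^ 2) % 8 = 4 := by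
  have h : a % 8 = 0 ∨ a % 8 = 1 ∨ a % 8 = 2 ∨ a % 8 = 3 ∨ a % 8 = 4 ∨ a % 8 = 5 ∨ a % 8 = 6 ∨
    a % 8 = 7 := by omega
  rcases h with h | h | h | h | h | h | h | h <;> simp [pow_two, Int.mul_emod, h]

theorem elem (n : ℕ) (hnsf : Squarefree n) (hpf : ∀ q : ℕ, q.Prime → q ∣ n → q % 8 = 1)
    (C : ℕ) (hC : C % 2 = 1) (x y : ℤ) (hxy : IsCoprime x y)
    (h : (C : ℤ) ^ 2 = x ^ 2 + n * y ^ 2) : C % 4 = 1 := by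
  have hn0 : n ≠ 0 := hnsf.ne_zero
  have hn8 := prod_mod8 n hn0 hpf
  by_cases hy : y = 0
  · subst hy
    rw [isCoprime_zero_right, Int.isUnit_iff] at hxy
    have : (C : ℤ) ^ 2 = 1 := by rcases hxy with rfl | rfl <;> simpa using h
    have : C ^ 2 = 1 := by exact_mod_cast this
    have : C = 1 := by simpa using this
    omega
  have hCx : IsCoprime (C : ℤ) x := by
    rw [Int.isCoprime_iff_gcd_eq_one]
    by_contra hg
    obtain ⟨r, hr, hrg⟩ := Nat.exists_prime_and_dvd hg
    have hr1 : (r : ℤ) ∣ C := (Int.natCast_dvd_natCast.mpr hrg).trans (Int.gcd_dvd_left ..)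
    have hr2 : (r : ℤ) ∣ x := (Int.natCast_dvd_natCast.mpr hrg).trans (Int.gcd_dvd_right ..)
    have hrp : Prime (r : ℤ) := Nat.prime_iff_prime_int.mp hr
    have hry : ¬ (r : ℤ) ∣ y := fun hry => hrp.not_isUnit (hxy.isUnit_of_dvd' hr2 hry)
    have hd : (r : ℤ) ^ 2 ∣ n * y ^ 2 := by
      have : (n : ℤ) * y ^ 2 = C ^ 2 - x ^ 2 := by rw [h]; ring
      rw [this]
      exact dvd_sub (pow_dvd_pow_of_dvd hr1 2) (pow_dvd_pow_of_dvd hr2 2)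
    have hcop : IsCoprime ((r : ℤ) ^ 2) (y ^ 2) :=
      IsCoprime.pow ((Prime.coprime_iff_not_dvd hrp).mpr hry)
    have hd2 := hcop.dvd_of_dvd_mul_right hd
    have hd3 : r * r ∣ n := by rw [← sq]; exact_mod_cast hd2
    exact hr.one_lt.ne' (Nat.isUnit_iff.mp (hnsf r hd3))
  have hny : 0 < (n : ℤ) * y ^ 2 := by positivity
  have hlt : |x| < C := by
    apply lt_of_pow_lt_pow_left₀ 2 (by positivity)
    rw [sq_abs]; linarith
  rw [abs_lt] at hlt
  obtain ⟨m, hm⟩ : ∃ m : ℤ, (n : ℤ) = 8 * m + 1 := ⟨n / 8, by omega⟩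
  have hC2 : (C : ℤ) ^ 2 % 8 = 1 := by
    rcases sq_mod8 C with h0 | h0 | h0
    · have : ((C : ℤ) ^ 2) % 2 = 0 := by omega
      rw [pow_two, Int.mul_emod, show (C : ℤ) % 2 = 1 by omega] at this; simp at this
    · exact h0
    · have : ((C : ℤ) ^ 2) % 2 = 0 := by omega
      rw [pow_two, Int.mul_emod, show (C : ℤ) % 2 = 1 by omega] at this; simp at this
  have hmod : (x ^ 2 + y ^ 2) % 8 = 1 := by
    have : (C : ℤ) ^ 2 = x ^ 2 + y ^ 2 + 8 * (m * y ^ 2) := by rw [h, hm]; ring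
    omega
  rcases Int.even_or_odd' y with ⟨v, hv | hv⟩
  · -- y even, x odd
    obtain ⟨k, hk⟩ : ∃ k, x = 2 * k + 1 := by
      rcases Int.even_or_odd' x with ⟨u, hu | hu⟩
      · exfalso; rw [hu, hv] at hmod; ring_nf at hmod; omega
      · exact ⟨u, hu⟩
    obtain ⟨c, hc⟩ : ∃ c : ℤ, (C : ℤ) = 2 * c + 1 := ⟨C / 2, by omega⟩
    have hprod : (c - k) * (c + k + 1) = n * v ^ 2 := by
      rw [hc, hk, hv] at h
      linarith
    have hcop : IsCoprime (c - k) (c + k + 1) := by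
      obtain ⟨p, q, hpq⟩ := hCx
      refine ⟨p - q, p + q, ?_⟩
      rw [hc, hk] at hpq
      linear_combination hpq
    obtain ⟨a, ha⟩ := sqpart_mod n hpf _ _ v (by omega) (by omega) hn0 hcop hprod
    obtain ⟨b, hb⟩ := sqpart_mod n hpf _ _ v (by omega) (by omega) hn0 hcop.symm
      (by rw [mul_comm]; exact hprod)
    have := sq_mod8 a
    have := sq_mod8 b
    omega
  · obtain ⟨k, hk⟩ : ∃ k, x = 2 * k := by
      rcases Int.even_or_odd' x with ⟨u, hu | hu⟩
      · exact ⟨u, hu⟩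
      · exfalso; rw [hu, hv] at hmod; ring_nf at hmod; omega
    have hprod : (C - x) * (C + x) = n * y ^ 2 := by linear_combination h
    have hcop : IsCoprime ((C : ℤ) - x) (C + x) := by
      have h2 : IsCoprime (2 : ℤ) (C - x) := ⟨- (((C : ℤ) - x) / 2), 1, by omega⟩
      have h3 : IsCoprime ((C : ℤ) - x) (2 * C) := by
        refine IsCoprime.mul_right h2.symm ?_
        obtain ⟨p, q, hpq⟩ := hCx
        exact ⟨-q, p + q, by linear_combination hpq⟩
      obtain ⟨p, q, hpq⟩ := h3
      exact ⟨p + q, q, by linear_combination hpq⟩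
    obtain ⟨a, ha⟩ := sqpart_mod n hpf _ _ y (by omega) (by omega) hn0 hcop hprod
    obtain ⟨b, hb⟩ := sqpart_mod n hpf _ _ y (by omega) (by omega) hn0 hcop.symm
      (by rw [mul_comm]; exact hprod)
    have := sq_mod8 a
    have := sq_mod8 b
    omega

theorem odd_ordCompl (m : ℕ) (hm : m % 2 = 1) : ordCompl[2] m = m :=
  (Nat.ordCompl_eq_self_iff_zero_or_not_dvd m Nat.prime_two).mpr (Or.inr (by omega))

theorem ordCompl_two_mul (m : ℕ) : ordCompl[2] (2 * m) = ordCompl[2] m := by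
  rw [Nat.ordCompl_mul, show ordCompl[2] 2 = 1 by rw [Nat.Prime.factorization_self Nat.prime_two]; rfl, one_mul]

theorem oddpart (n : ℕ) (hn8 : n % 8 = 1) (m : ℕ) : m ≠ 0 → ∀ (x y : ℤ),
    (m : ℤ) = x ^ 2 + n * y ^ 2 → (ordCompl[2] m) % 4 = 1 := by
  induction m using Nat.strong_induction_on with
  | _ m ih =>
  intro hm x y h
  obtain ⟨c, hc⟩ : ∃ m : ℤ, (n : ℤ) = 8 * m + 1 := ⟨n / 8, by omega⟩
  have hmod : (m : ℤ) = x ^ 2 + y ^ 2 + 8 * (c * y ^ 2) := by rw [h, hc]; ring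
  rcases Int.even_or_odd' x with ⟨u, hu | hu⟩ <;> rcases Int.even_or_odd' y with ⟨v, hv | hv⟩
  · obtain ⟨k, hk⟩ : ∃ k, m = 2 * (2 * k) := by
      refine ⟨m / 4, ?_⟩
      rw [hu, hv] at h; ring_nf at h; omega
    rw [hk, ordCompl_two_mul, ordCompl_two_mul]
    apply ih k (by omega) (by omega) u v
    rw [hu, hv, hk] at h
    push_cast at h
    linarith
  · have : m % 4 = 1 := by rw [hu, hv] at hmod; ring_nf at hmod; omega
    rw [odd_ordCompl m (by omega)]; exact this
  · have : m % 4 = 1 := by rw [hu, hv] at hmod; ring_nf at hmod; omega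
    rw [odd_ordCompl m (by omega)]; exact this
  · have : m % 8 = 2 := by
      have h1 := sq_mod8 x
      have h2 := sq_mod8 y
      have h3 : x ^ 2 % 2 = 1 := by rw [hu]; ring_nf; omega
      have h4 : y ^ 2 % 2 = 1 := by rw [hv]; ring_nf; omega
      omega
    obtain ⟨k, hk⟩ : ∃ k, m = 2 * k := ⟨m / 2, by omega⟩
    rw [hk, ordCompl_two_mul, odd_ordCompl k (by omega)]
    omega

theorem exists_q (n : ℕ) (hn1 : n ≠ 1) (hnsf : Squarefree n) (hn8 : n % 8 = 1)
    (hpf : ∀ q : ℕ, q.Prime → q ∣ n → q % 8 = 1) :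
    ∃ q : ℕ, q.Prime ∧ q % 4 = 3 ∧ ∃ r : ℤ, (q : ℤ) ∣ r ^ 2 + n := by
  obtain ⟨p, hp, m, hm⟩ := Nat.exists_prime_and_dvd hn1
  have : Fact p.Prime := ⟨hp⟩
  have hp8 := hpf p hp ⟨m, hm⟩
  have hp2 : p ≠ 2 := by omega
  obtain ⟨u, hu⟩ := FiniteField.exists_nonsquare (F := ZMod p) (by rw [ZMod.ringChar_zmod_n]; exact hp2)
  have hm0 : m ≠ 0 := by rintro rfl; omega
  have hcpm : Nat.Coprime p m := by
    rw [hm] at hnsf; exact Nat.coprime_of_squarefree_mul hnsf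
  have hc4 : Nat.Coprime (p * m) 4 := by
    rw [← hm]
    have : Nat.Coprime n 2 := by rw [Nat.coprime_two_right, Nat.odd_iff]; omega
    exact Nat.Coprime.pow_right 2 this
  obtain ⟨a0, ha0p, ha0m⟩ := Nat.chineseRemainder hcpm u.val 1
  obtain ⟨a, ha, ha4⟩ := Nat.chineseRemainder hc4 a0 3
  have hap : a ≡ u.val [MOD p] := (ha.of_mul_right m).trans ha0p
  have ham : a ≡ 1 [MOD m] := (ha.of_mul_left p).trans ha0m
  have hu0 : u ≠ 0 := by rintro rfl; exact hu (IsSquare.zero)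
  have hau : (a : ZMod p) = u := by
    rw [(ZMod.natCast_eq_natCast_iff _ _ _).mpr hap, ZMod.natCast_val, ZMod.cast_id]
  have hcop : a.Coprime (p * m * 4) := by
    refine Nat.Coprime.mul_right (Nat.Coprime.mul_right ?_ ?_) ?_
    · rw [Nat.coprime_comm, hp.coprime_iff_not_dvd, ← ZMod.natCast_eq_zero_iff, hau]; exact hu0
    · have := ham.gcd_eq
      rw [Nat.gcd_one_left] at this; exact this
    · have := ha4.gcd_eq
      norm_num at this; exact this
  obtain ⟨q, -, hq, hqa⟩ := Nat.forall_exists_prime_gt_and_modEq 0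
    (show p * m * 4 ≠ 0 by simp [hp.ne_zero, hm0]) hcop
  have : Fact q.Prime := ⟨hq⟩
  have hq4 : q % 4 = 3 := (hqa.of_mul_left (p * m)).trans ha4
  have hqp : (q : ZMod p) = u := by
    rw [← hau, ZMod.natCast_eq_natCast_iff]
    exact (hqa.of_mul_right 4).of_mul_right m
  have hqm : q ≡ 1 [MOD m] := ((hqa.of_mul_right 4).of_mul_left p).trans ham
  refine ⟨q, hq, hq4, ?_⟩
  have hqodd : Odd q := by rw [Nat.odd_iff]; omega
  have j1 : jacobiSym q p = -1 := by
    rw [← jacobiSym.legendreSym.to_jacobiSym, legendreSym.eq_neg_one_iff]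
    simpa [hqp] using hu
  have j2 : jacobiSym q m = 1 := by
    rw [jacobiSym.mod_left, show (q : ℤ) % m = 1 % m from by exact_mod_cast hqm, ← jacobiSym.mod_left,
      jacobiSym.one_left]
  have j3 : jacobiSym q n = -1 := by
    rw [hm, jacobiSym.mul_right' _ hp.ne_zero hm0, j1, j2]; rfl
  have j4 : jacobiSym n q = -1 := by
    rw [jacobiSym.quadratic_reciprocity_one_mod_four (by omega) hqodd, j3]
  have j5 : jacobiSym (-n : ℤ) q = 1 := by
    rw [neg_eq_neg_one_mul, jacobiSym.mul_left, j4, jacobiSym.at_neg_one hqodd,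
      ZMod.χ₄_nat_three_mod_four hq4]; rfl
  rw [← jacobiSym.legendreSym.to_jacobiSym] at j5
  have hsq := (legendreSym.eq_one_iff q (by intro h0; rw [(legendreSym.eq_zero_iff q _).mpr h0] at j5; omega)).mp j5
  obtain ⟨r, hr⟩ := hsq
  refine ⟨r.val, ?_⟩
  rw [← ZMod.intCast_zmod_eq_zero_iff_dvd]
  push_cast
  rw [ZMod.natCast_val, ZMod.cast_id, sq, ← hr]
  push_cast; ring
section ideals
open scoped nonZeroDivisors
variable {K : Type} [Field K] [NumberField K]

theorem coord_dvd (n : ℕ) (hnpos : 0 < n) (w : 𝓞 K)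
    (hcoord : ∀ α : 𝓞 K, ∃ x y : ℤ, α = x + y * w)
    (hN : ∀ x y : ℤ, (Ideal.absNorm (Ideal.span {(x : 𝓞 K) + y * w}) : ℤ) = x ^ 2 + n * y ^ 2)
    (q : ℤ) (x y : ℤ) (h : (q : 𝓞 K) ∣ x + y * w) : q ∣ x ∧ q ∣ y := by
  obtain ⟨β, hβ⟩ := h
  obtain ⟨a, b, rfl⟩ := hcoord β
  have h0 : (((x - q * a : ℤ)) : 𝓞 K) + ((y - q * b : ℤ) : 𝓞 K) * w = 0 := by
    push_cast; linear_combination hβ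
  have h1 := hN (x - q * a) (y - q * b)
  rw [h0] at h1
  have h2 : (0 : ℤ) = (x - q * a) ^ 2 + n * (y - q * b) ^ 2 := by simpa using h1
  have hn : (0 : ℤ) < n := by exact_mod_cast hnpos
  have h3 : (x - q * a) ^ 2 = 0 := by
    have := sq_nonneg (x - q * a)
    have := mul_nonneg hn.le (sq_nonneg (y - q * b))
    linarith
  have h4 : (n : ℤ) * (y - q * b) ^ 2 = 0 := by linarith
  rw [mul_eq_zero, pow_eq_zero_iff two_ne_zero] at h4
  rw [pow_eq_zero_iff two_ne_zero] at h3
  exact ⟨⟨a, by linarith⟩, ⟨b, by rcases h4 with h4 | h4 <;> linarith⟩⟩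

theorem noncoexist (n : ℕ) (hn8 : n % 8 = 1) (w : 𝓞 K)
    (hcoord : ∀ α : 𝓞 K, ∃ x y : ℤ, α = x + y * w)
    (hN : ∀ x y : ℤ, (Ideal.absNorm (Ideal.span {(x : 𝓞 K) + y * w}) : ℤ) = x ^ 2 + n * y ^ 2)
    (I J : (Ideal (𝓞 K))⁰) (h : ClassGroup.mk0 I = ClassGroup.mk0 J)
    (hI : Ideal.absNorm (I : Ideal (𝓞 K)) % 4 = 1) (hJ : Ideal.absNorm (J : Ideal (𝓞 K)) % 4 = 3) :
    False := by
  obtain ⟨α, β, hα, hβ, hab⟩ := ClassGroup.mk0_eq_mk0_iff.mp h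
  have key : ∀ γ : 𝓞 K, γ ≠ 0 → ordCompl[2] (Ideal.absNorm (Ideal.span {γ})) % 4 = 1 := by
    intro γ hγ
    obtain ⟨x, y, rfl⟩ := hcoord γ
    apply oddpart n hn8 _ _ x y (hN x y)
    rw [Ne, Ideal.absNorm_eq_zero_iff, Ideal.span_singleton_eq_bot]
    exact hγ
  have h1 := congrArg (fun I => ordCompl[2] (Ideal.absNorm I) % 4) hab
  simp only [map_mul, Nat.ordCompl_mul] at h1
  rw [odd_ordCompl _ (show Ideal.absNorm (I : Ideal (𝓞 K)) % 2 = 1 by omega),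
    odd_ordCompl _ (show Ideal.absNorm (J : Ideal (𝓞 K)) % 2 = 1 by omega),
    Nat.mul_mod, key α hα, hI] at h1
  rw [Nat.mul_mod (Ideal.absNorm (Ideal.span {β}) / _), key β hβ, hJ] at h1
  simp at h1

theorem t_sq (n : ℕ) (hn8 : n % 8 = 1) (w : 𝓞 K) (hw : w ^ 2 = -(n : 𝓞 K)) :
    (Ideal.span {2, 1 + w} : Ideal (𝓞 K)) ^ 2 = Ideal.span {2} := by
  obtain ⟨m, hm⟩ : ∃ m : ℕ, n = 8 * m + 1 := ⟨n / 8, by omega⟩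
  rw [hm] at hw
  push_cast at hw
  have hmem1 : (2 : 𝓞 K) ∈ (Ideal.span {2, 1 + w} : Ideal (𝓞 K)) := Ideal.subset_span (by simp)
  have hmem2 : (1 + w : 𝓞 K) ∈ (Ideal.span {2, 1 + w} : Ideal (𝓞 K)) := Ideal.subset_span (by simp)
  apply le_antisymm
  · rw [sq, Ideal.span_pair_mul_span_pair, Ideal.span_le]
    rintro z (rfl | rfl | rfl | rfl) <;> rw [SetLike.mem_coe, Ideal.mem_span_singleton]
    · exact ⟨2, by ring⟩
    · exact ⟨1 + w, by ring⟩
    · exact ⟨1 + w, by ring⟩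
    · exact ⟨w - 4 * m, by linear_combination hw⟩
  · rw [Ideal.span_singleton_le_iff_mem, sq]
    have e : (2 : 𝓞 K) = (2 * (1 + w) - (1 + w) * (1 + w)) + (- (2 * m)) * (2 * 2) := by
      linear_combination hw
    have key : (2 * (1 + w) - (1 + w) * (1 + w)) + (- (2 * m)) * (2 * 2) ∈
      (Ideal.span {2, 1 + w} : Ideal (𝓞 K)) * (Ideal.span {2, 1 + w} : Ideal (𝓞 K)) :=
      add_mem (sub_mem (Ideal.mul_mem_mul hmem1 hmem2) (Ideal.mul_mem_mul hmem2 hmem2))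
      (Ideal.mul_mem_left _ _ (Ideal.mul_mem_mul hmem1 hmem1))
    rw [← e] at key
    exact key

theorem tb (n : ℕ) (w : 𝓞 K) (hw : w ^ 2 = -(n : 𝓞 K)) (x z : ℤ)
    (hx : x % 2 = 1) (hz : z % 2 = 1) (hcop : IsCoprime x z) (h : x ^ 2 + n = 2 * z ^ 2) :
    (Ideal.span {2, 1 + w} : Ideal (𝓞 K)) * (Ideal.span {(z : 𝓞 K), x + w}) ^ 2 =
      Ideal.span {(x : 𝓞 K) + w} := by
  have hR : (x : 𝓞 K) ^ 2 + n = 2 * (z : 𝓞 K) ^ 2 := by exact_mod_cast congrArg (Int.cast : ℤ → 𝓞 K) h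
  obtain ⟨k, hk⟩ : ∃ k, x = 2 * k + 1 := ⟨x / 2, by omega⟩
  have hkR : (x : 𝓞 K) = 2 * k + 1 := by rw [hk]; push_cast; ring
  have m1 : (2 : 𝓞 K) ∈ (Ideal.span {2, 1 + w} : Ideal (𝓞 K)) := Ideal.subset_span (by simp)
  have m2 : (x + w : 𝓞 K) ∈ (Ideal.span {2, 1 + w} : Ideal (𝓞 K)) := by
    rw [Ideal.mem_span_pair]; exact ⟨k, 1, by rw [hkR]; ring⟩
  have m3 : (z : 𝓞 K) ∈ (Ideal.span {(z : 𝓞 K), x + w} : Ideal (𝓞 K)) := Ideal.subset_span (by simp)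
  have m4 : (x + w : 𝓞 K) ∈ (Ideal.span {(z : 𝓞 K), x + w} : Ideal (𝓞 K)) :=
    Ideal.subset_span (by simp)
  apply le_antisymm
  · have ht : (Ideal.span {2, 1 + w} : Ideal (𝓞 K)) ≤ Ideal.span {2, (x : 𝓞 K) + w} := by
      rw [Ideal.span_le]
      rintro y (rfl | rfl)
      · exact Ideal.subset_span (by simp)
      · rw [SetLike.mem_coe, Ideal.mem_span_pair]; exact ⟨-k, 1, by rw [hkR]; ring⟩
    refine (Ideal.mul_mono_left ht).trans ?_
    rw [sq, Ideal.span_pair_mul_span_pair, Ideal.mul_le]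
    intro a ha b hb
    rw [Ideal.mem_span_pair] at ha
    obtain ⟨c, d, rfl⟩ := ha
    rw [Ideal.mem_span_singleton]
    have hb' : (x + w : 𝓞 K) ∣ 2 * b := by
      have : Ideal.span {(z : 𝓞 K) * z, z * (x + w), (x + w) * z, (x + w) * (x + w)} ≤
          Submodule.comap (LinearMap.mulLeft (𝓞 K) (2 : 𝓞 K)) (Ideal.span {(x : 𝓞 K) + w}) := by
        rw [Ideal.span_le]
        rintro y (rfl | rfl | rfl | rfl) <;>
          simp only [SetLike.mem_coe, Submodule.mem_comap, LinearMap.mulLeft_apply] <;>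
          rw [Ideal.mem_span_singleton]
        · exact ⟨x - w, by linear_combination -hR + hw⟩
        · exact ⟨2 * z, by ring⟩
        · exact ⟨2 * z, by ring⟩
        · exact ⟨2 * (x + w), by ring⟩
      have := this hb
      simp only [Submodule.mem_comap, LinearMap.mulLeft_apply] at this
      rwa [Ideal.mem_span_singleton] at this
    obtain ⟨e, he⟩ := hb'
    exact ⟨c * e + d * b, by linear_combination c * he⟩
  · rw [Ideal.span_singleton_le_iff_mem]
    have h2z : IsCoprime (2 : ℤ) z := ⟨-(z / 2), 1, by omega⟩
    have hc : IsCoprime (2 * 2 * x) (z ^ 2) :=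
      IsCoprime.pow_right (IsCoprime.mul_left (IsCoprime.mul_left h2z h2z) hcop)
    obtain ⟨p, q, hpq⟩ := hc
    have hpqR : (p : 𝓞 K) * (2 * 2 * x) + q * z ^ 2 = 1 := by
      exact_mod_cast congrArg (Int.cast : ℤ → 𝓞 K) hpq
    have e : (x : 𝓞 K) + w = (2 * p) * (2 * (z * z)) + p * (2 * ((x + w) * (x + w)))
        + q * ((x + w) * (z * z)) := by
      linear_combination (-(x + w : 𝓞 K)) * hpqR + 2 * p * hR - 2 * p * hw
    have key : (2 * p) * (2 * (z * z)) + p * (2 * ((x + w) * (x + w)))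
        + q * ((x + w) * (z * z)) ∈ (Ideal.span {2, 1 + w} : Ideal (𝓞 K)) * (Ideal.span {(z : 𝓞 K), x + w}) ^ 2 := by
      rw [sq]
      refine add_mem (add_mem ?_ ?_) ?_
      · exact Ideal.mul_mem_left _ _ (Ideal.mul_mem_mul m1 (Ideal.mul_mem_mul m3 m3))
      · exact Ideal.mul_mem_left _ _ (Ideal.mul_mem_mul m1 (Ideal.mul_mem_mul m4 m4))
      · exact Ideal.mul_mem_left _ _ (Ideal.mul_mem_mul m2 (Ideal.mul_mem_mul m3 m3))
    rw [← e] at key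
    exact key

theorem prime_mem (P : Ideal (𝓞 K)) [hP : P.IsPrime] (m : ℕ) : m ≠ 0 → (m : 𝓞 K) ∈ P →
    ∃ p : ℕ, p.Prime ∧ (p : 𝓞 K) ∈ P := by
  induction m using induction_on_primes with
  | zero => intro h; exact absurd rfl h
  | one => intro _ h; exact absurd ((Ideal.eq_top_iff_one P).mpr (by simpa using h)) hP.ne_top
  | prime_mul p a hp ih =>
    intro h0 hm
    push_cast at hm
    rcases hP.mem_or_mem hm with h | h
    · exact ⟨p, hp, h⟩
    · exact ih (by rintro rfl; simp at h0) h

theorem int_norm (n : ℕ) (w : 𝓞 K)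
    (hN : ∀ x y : ℤ, (Ideal.absNorm (Ideal.span {(x : 𝓞 K) + y * w}) : ℤ) = x ^ 2 + n * y ^ 2)
    (q : ℕ) : Ideal.absNorm (Ideal.span {(q : 𝓞 K)}) = q ^ 2 := by
  have := hN q 0
  simp only [Int.cast_natCast, Int.cast_zero, zero_mul, add_zero] at this
  zify; rw [this]; ring

theorem even_prime (n : ℕ) (hn8 : n % 8 = 1) (w : 𝓞 K) (hw : w ^ 2 = -(n : 𝓞 K))
    (hN : ∀ x y : ℤ, (Ideal.absNorm (Ideal.span {(x : 𝓞 K) + y * w}) : ℤ) = x ^ 2 + n * y ^ 2)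
    (P : Ideal (𝓞 K)) (hP : P.IsPrime) (hP0 : P ≠ ⊥) (hev : Ideal.absNorm P % 2 = 0) :
    P = Ideal.span {2, 1 + w} := by
  obtain ⟨p, hp, hpP⟩ := prime_mem P (Ideal.absNorm P) (by rwa [Ne, Ideal.absNorm_eq_zero_iff])
    (Ideal.absNorm_mem P)
  have hdvd : P ∣ Ideal.span {(p : 𝓞 K)} := by
    rw [Ideal.dvd_iff_le, Ideal.span_singleton_le_iff_mem]; exact hpP
  have h1 := map_dvd Ideal.absNorm hdvd
  rw [int_norm n w hN] at h1
  have h2 : 2 ∣ p := Nat.prime_two.dvd_of_dvd_pow ((Nat.dvd_of_mod_eq_zero hev).trans h1)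
  have h3 : p = 2 := ((Nat.prime_dvd_prime_iff_eq Nat.prime_two hp).mp h2).symm
  rw [h3] at hpP
  have hle : (Ideal.span {2, 1 + w} : Ideal (𝓞 K)) ≤ P := by
    apply hP.le_of_pow_le (n := 2)
    rw [t_sq n hn8 w hw, Ideal.span_singleton_le_iff_mem]
    exact_mod_cast hpP
  have htn : Ideal.absNorm (Ideal.span {2, 1 + w} : Ideal (𝓞 K)) = 2 := by
    have := congrArg Ideal.absNorm (t_sq n hn8 w hw)
    rw [map_pow, show (2 : 𝓞 K) = ((2 : ℕ) : 𝓞 K) by norm_num, int_norm n w hN] at this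
    exact_mod_cast Nat.pow_left_injective (n := 2) (by norm_num) this
  have htp : (Ideal.span {2, 1 + w} : Ideal (𝓞 K)).IsPrime :=
    Ideal.isPrime_of_irreducible_absNorm (by rw [htn]; exact Nat.prime_two)
  have ht0 : (Ideal.span {2, 1 + w} : Ideal (𝓞 K)) ≠ ⊥ := by
    intro h; rw [h] at htn; simp at htn
  exact ((htp.isMaximal ht0).eq_of_le hP.ne_top hle).symm

theorem t_norm (n : ℕ) (hn8 : n % 8 = 1) (w : 𝓞 K) (hw : w ^ 2 = -(n : 𝓞 K))
    (hN : ∀ x y : ℤ, (Ideal.absNorm (Ideal.span {(x : 𝓞 K) + y * w}) : ℤ) = x ^ 2 + n * y ^ 2) :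
    Ideal.absNorm (Ideal.span {2, 1 + w} : Ideal (𝓞 K)) = 2 := by
  have := congrArg Ideal.absNorm (t_sq n hn8 w hw)
  rw [map_pow, show (2 : 𝓞 K) = ((2 : ℕ) : 𝓞 K) by norm_num, int_norm n w hN] at this
  exact_mod_cast Nat.pow_left_injective (n := 2) (by norm_num) this

theorem odd_rep (n : ℕ) (hn8 : n % 8 = 1) (w : 𝓞 K) (hw : w ^ 2 = -(n : 𝓞 K))
    (hN : ∀ x y : ℤ, (Ideal.absNorm (Ideal.span {(x : 𝓞 K) + y * w}) : ℤ) = x ^ 2 + n * y ^ 2)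
    (ht : (Ideal.span {2, 1 + w} : Ideal (𝓞 K)) ∈ (Ideal (𝓞 K))⁰)
    (hto : ∃ J : (Ideal (𝓞 K))⁰, Ideal.absNorm (J : Ideal (𝓞 K)) % 2 = 1 ∧
      ClassGroup.mk0 J = ClassGroup.mk0 ⟨_, ht⟩) (I : Ideal (𝓞 K)) :
    ∀ hI : I ∈ (Ideal (𝓞 K))⁰, ∃ J : (Ideal (𝓞 K))⁰, Ideal.absNorm (J : Ideal (𝓞 K)) % 2 = 1 ∧
      ClassGroup.mk0 J = ClassGroup.mk0 ⟨I, hI⟩ := by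
  induction I using UniqueFactorizationMonoid.induction_on_prime with
  | h₁ => intro hI; exact absurd hI zero_notMem_nonZeroDivisors
  | h₂ x hx =>
    intro hI
    refine ⟨⟨x, hI⟩, ?_, rfl⟩
    rw [Ideal.isUnit_iff] at hx
    simp [hx]
  | h₃ a p ha hp ih =>
    intro hI
    have ha' : a ∈ (Ideal (𝓞 K))⁰ := mem_nonZeroDivisors_of_ne_zero ha
    have hp' : p ∈ (Ideal (𝓞 K))⁰ := mem_nonZeroDivisors_of_ne_zero hp.ne_zero
    obtain ⟨J, hJ1, hJ2⟩ := ih ha'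
    have hpp : ∃ J : (Ideal (𝓞 K))⁰, Ideal.absNorm (J : Ideal (𝓞 K)) % 2 = 1 ∧
        ClassGroup.mk0 J = ClassGroup.mk0 ⟨p, hp'⟩ := by
      rcases Nat.mod_two_eq_zero_or_one (Ideal.absNorm p) with h | h
      · have := even_prime n hn8 w hw hN p (Ideal.isPrime_of_prime hp) hp.ne_zero h
        subst this
        exact hto
      · exact ⟨⟨p, hp'⟩, h, rfl⟩
    obtain ⟨J', hJ1', hJ2'⟩ := hpp
    refine ⟨J' * J, ?_, ?_⟩
    · rw [Submonoid.coe_mul, map_mul, Nat.mul_mod, hJ1, hJ1']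
    · rw [map_mul, hJ2, hJ2', ← map_mul]; rfl

theorem torsion (n : ℕ) (hnsf : Squarefree n) (hn8 : n % 8 = 1)
    (hpf : ∀ q : ℕ, q.Prime → q ∣ n → q % 8 = 1)
    (w : 𝓞 K) (hw : w ^ 2 = -(n : 𝓞 K))
    (hcoord : ∀ α : 𝓞 K, ∃ x y : ℤ, α = x + y * w)
    (hN : ∀ x y : ℤ, (Ideal.absNorm (Ideal.span {(x : 𝓞 K) + y * w}) : ℤ) = x ^ 2 + n * y ^ 2)
    (c : ClassGroup (𝓞 K)) (hc : c ^ 2 = 1)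
    (hodd : ∃ J : (Ideal (𝓞 K))⁰, Ideal.absNorm (J : Ideal (𝓞 K)) % 2 = 1 ∧
      ClassGroup.mk0 J = c) :
    ∃ J : (Ideal (𝓞 K))⁰, Ideal.absNorm (J : Ideal (𝓞 K)) % 4 = 1 ∧ ClassGroup.mk0 J = c := by
  classical
  have hn0 : 0 < n := Nat.pos_of_ne_zero hnsf.ne_zero
  have hex : ∃ C : ℕ, ∃ J : (Ideal (𝓞 K))⁰, Ideal.absNorm (J : Ideal (𝓞 K)) = C ∧ C % 2 = 1 ∧
      ClassGroup.mk0 J = c := by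
    obtain ⟨J, h1, h2⟩ := hodd
    exact ⟨_, J, rfl, h1, h2⟩
  obtain ⟨J, hJC, hCodd, hJc⟩ := Nat.find_spec hex
  have hmin := fun m (hm : m < Nat.find hex) => Nat.find_min hex hm
  set C := Nat.find hex with hCdef
  refine ⟨J, ?_, hJc⟩
  rw [hJC]
  have hJ2 : ClassGroup.mk0 (J * J) = 1 := by rw [map_mul, hJc, ← sq, hc]
  have hpr := (ClassGroup.mk0_eq_one_iff (J * J).2).mp hJ2
  obtain ⟨α, hα⟩ := hpr.principal
  obtain ⟨x, y, hxy⟩ := hcoord α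
  have hsp : (J : Ideal (𝓞 K)) * J = Ideal.span {(x : 𝓞 K) + y * w} := by
    rw [← hxy]; exact hα
  have hnorm : (C : ℤ) ^ 2 = x ^ 2 + n * y ^ 2 := by
    rw [← hN, ← hsp, map_mul, hJC]; push_cast; ring
  have hgpos : 0 < Int.gcd x y := by
    rw [Nat.pos_iff_ne_zero]
    intro h0
    rw [Int.gcd_eq_zero_iff] at h0
    rw [h0.1, h0.2] at hnorm
    have : C = 0 := by simpa using hnorm
    omega
  obtain ⟨g, x', y', hg, hcop, hx', hy'⟩ := Int.exists_gcd_one' hgpos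
  have hg0 : g ≠ 0 := by omega
  have hgC : g ∣ C := by
    have : (g : ℤ) ^ 2 ∣ (C : ℤ) ^ 2 := by
      rw [hnorm, hx', hy']; exact ⟨x' ^ 2 + n * y' ^ 2, by ring⟩
    rw [Int.pow_dvd_pow_iff two_ne_zero] at this
    exact_mod_cast this
  have hg8 : g % 8 = 1 := by
    apply prod_mod8 g hg0
    intro q hq hqg
    apply hpf q hq
    by_contra hqn
    have hqC : q ∣ C := hqg.trans hgC
    have hq2 : ¬ q ∣ 2 := by
      intro h
      have := (Nat.prime_dvd_prime_iff_eq hq Nat.prime_two).mp h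
      rw [this] at hqC; omega
    have hqp : Prime (q : ℤ) := Nat.prime_iff_prime_int.mp hq
    have hle : (J : Ideal (𝓞 K)) ≤ Ideal.span {(q : 𝓞 K)} := by
      intro j hj
      rw [Ideal.mem_span_singleton]
      have h1 : j * j ∈ (J : Ideal (𝓞 K)) * J := Ideal.mul_mem_mul hj hj
      rw [hsp, Ideal.mem_span_singleton] at h1
      have h2 : ((q : ℤ) : 𝓞 K) ∣ j * j := by
        refine Dvd.dvd.trans ?_ h1
        obtain ⟨k, hk⟩ := hqg
        refine ⟨(k : 𝓞 K) * (x' + y' * w), ?_⟩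
        rw [hx', hy', hk]; push_cast; ring
      obtain ⟨a, b, rfl⟩ := hcoord j
      have h3 : ((a : 𝓞 K) + b * w) * (a + b * w) =
          ((a ^ 2 - n * b ^ 2 : ℤ) : 𝓞 K) + ((2 * a * b : ℤ) : 𝓞 K) * w := by
        push_cast; linear_combination (b : 𝓞 K) ^ 2 * hw
      rw [h3] at h2
      obtain ⟨h4, h5⟩ := coord_dvd n hn0 w hcoord hN _ _ _ h2
      have h6 : (q : ℤ) ∣ a ∧ (q : ℤ) ∣ b := by
        rcases hqp.dvd_or_dvd h5 with h5 | h5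
        · rcases hqp.dvd_or_dvd h5 with h5 | h5
          · exact absurd (by exact_mod_cast h5) hq2
          · refine ⟨h5, ?_⟩
            have : (q : ℤ) ∣ n * b ^ 2 := by
              have h7 := dvd_sub (dvd_pow h5 two_ne_zero) h4
              simpa using h7
            rcases hqp.dvd_or_dvd this with h8 | h8
            · exact absurd (by exact_mod_cast h8) hqn
            · exact hqp.dvd_of_dvd_pow h8
        · refine ⟨?_, h5⟩
          have h7 := dvd_add h4 (Dvd.dvd.mul_left (dvd_pow h5 two_ne_zero) (n : ℤ))
          rw [sub_add_cancel] at h7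
          exact hqp.dvd_of_dvd_pow h7
      obtain ⟨⟨a', rfl⟩, ⟨b', rfl⟩⟩ := h6
      exact ⟨a' + b' * w, by push_cast; ring⟩
    rw [← Ideal.dvd_iff_le] at hle
    obtain ⟨J', hJ'⟩ := hle
    have hJ'0 : J' ∈ (Ideal (𝓞 K))⁰ := by
      apply mem_nonZeroDivisors_of_ne_zero
      rintro rfl
      exact nonZeroDivisors.ne_zero J.2 (by rw [hJ', mul_zero])
    have hnJ : C = q ^ 2 * Ideal.absNorm J' := by
      rw [← hJC, hJ', map_mul, int_norm n w hN]
    have hpos : 0 < Ideal.absNorm J' := by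
      rw [Nat.pos_iff_ne_zero]; intro h; rw [h] at hnJ; omega
    have hq4 : 1 < q ^ 2 := Nat.one_lt_pow two_ne_zero hq.one_lt
    apply hmin (Ideal.absNorm J') (by rw [hnJ]; nlinarith)
    refine ⟨⟨J', hJ'0⟩, rfl, ?_, ?_⟩
    · rw [hnJ] at hCodd
      rcases Nat.mod_two_eq_zero_or_one (Ideal.absNorm J') with h | h
      · rw [Nat.mul_mod, h] at hCodd; simp at hCodd
      · exact h
    · rw [← hJc, ClassGroup.mk0_eq_mk0_iff]
      refine ⟨q, 1, by exact_mod_cast hq.ne_zero, one_ne_zero, ?_⟩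
      simp [← hJ']
  obtain ⟨C', hC'⟩ := hgC
  have hC'odd : C' % 2 = 1 := by
    rw [hC'] at hCodd
    rcases Nat.mod_two_eq_zero_or_one C' with h | h
    · rw [Nat.mul_mod, h] at hCodd; simp at hCodd
    · exact h
  have hfin : C' % 4 = 1 := by
    apply elem n hnsf hpf C' hC'odd x' y' (Int.isCoprime_iff_gcd_eq_one.mpr hcop)
    have hgz : (g : ℤ) ^ 2 ≠ 0 := by positivity
    apply mul_left_cancel₀ hgz
    rw [hC', hx', hy'] at hnorm
    push_cast at hnorm
    linear_combination hnorm
  rw [hC', Nat.mul_mod, hfin, show g % 4 = 1 by omega]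

theorem q_ideal (n : ℕ) (hn0 : 0 < n) (w : 𝓞 K) (hw : w ^ 2 = -(n : 𝓞 K))
    (hcoord : ∀ α : 𝓞 K, ∃ x y : ℤ, α = x + y * w)
    (hN : ∀ x y : ℤ, (Ideal.absNorm (Ideal.span {(x : 𝓞 K) + y * w}) : ℤ) = x ^ 2 + n * y ^ 2)
    (q : ℕ) (hq : q.Prime) (hq2 : q ≠ 2) (hqn : ¬ q ∣ n) (r : ℤ) (hr : (q : ℤ) ∣ r ^ 2 + n) :
    ∃ J : Ideal (𝓞 K), Ideal.absNorm J = q := by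
  obtain ⟨k, hk⟩ := hr
  have hkR : (r : 𝓞 K) ^ 2 + n = q * k := by exact_mod_cast congrArg (Int.cast : ℤ → 𝓞 K) hk
  have hntop : ∀ e : ℤ, (e = 1 ∨ e = -1) →
      Ideal.absNorm (Ideal.span {(q : 𝓞 K), r + e * w}) ≠ 1 := by
    intro e he h1
    rw [Ideal.absNorm_eq_one_iff, Ideal.eq_top_iff_one, Ideal.mem_span_pair] at h1
    obtain ⟨a, b, hab⟩ := h1
    have he2 : (e : 𝓞 K) ^ 2 = 1 := by rcases he with rfl | rfl <;> simp
    have hd : ((q : ℤ) : 𝓞 K) ∣ (r : ℤ) + ((-e : ℤ) : 𝓞 K) * w := by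
      refine ⟨a * (r - e * w) + b * k, ?_⟩
      push_cast
      linear_combination (-(r - e * w : 𝓞 K)) * hab + b * hkR - b * w ^ 2 * he2 - b * hw
    have := (coord_dvd n hn0 w hcoord hN _ _ _ hd).2
    have h3 : (q : ℤ) ∣ 1 := by rcases he with rfl | rfl <;> simpa using this
    exact hq.one_lt.ne' (Nat.dvd_one.mp (by exact_mod_cast h3))
  have hprod : Ideal.span {(q : 𝓞 K), r + (1 : ℤ) * w} * Ideal.span {(q : 𝓞 K), r + (-1 : ℤ) * w} =
      Ideal.span {(q : 𝓞 K)} := by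
    apply le_antisymm
    · rw [Ideal.span_pair_mul_span_pair, Ideal.span_le]
      rintro y (rfl | rfl | rfl | rfl) <;> rw [SetLike.mem_coe, Ideal.mem_span_singleton]
      · exact ⟨_, rfl⟩
      · exact ⟨_, rfl⟩
      · exact ⟨_, mul_comm _ _⟩
      · exact ⟨k, by push_cast; linear_combination hkR - hw⟩
    · rw [Ideal.span_singleton_le_iff_mem]
      have hqp : Prime (q : ℤ) := Nat.prime_iff_prime_int.mp hq
      have hcop : IsCoprime (2 * r) (q : ℤ) := by
        rw [isCoprime_comm, Prime.coprime_iff_not_dvd hqp]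
        intro h
        rcases hqp.dvd_or_dvd h with h | h
        · exact hq2 ((Nat.prime_dvd_prime_iff_eq hq Nat.prime_two).mp (by exact_mod_cast h))
        · apply hqn
          have h2 : (q : ℤ) ∣ n := by
            have : (n : ℤ) = q * k - r ^ 2 := by linarith
            rw [this]
            exact dvd_sub (dvd_mul_right _ _) (dvd_pow h two_ne_zero)
          exact_mod_cast h2
      obtain ⟨a, b, hab⟩ := hcop
      have habR : (a : 𝓞 K) * (2 * r) + b * q = 1 := by
        exact_mod_cast congrArg (Int.cast : ℤ → 𝓞 K) hab
      have e : (q : 𝓞 K) = a * (q * (r + (-1 : ℤ) * w)) + a * ((r + (1 : ℤ) * w) * q) + b * (q * q) := by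
        push_cast
        linear_combination (-(q : 𝓞 K)) * habR
      have m1 : (q : 𝓞 K) ∈ Ideal.span {(q : 𝓞 K), r + (1 : ℤ) * w} := Ideal.subset_span (by simp)
      have m2 : (r + (1 : ℤ) * w : 𝓞 K) ∈ Ideal.span {(q : 𝓞 K), r + (1 : ℤ) * w} :=
        Ideal.subset_span (by simp)
      have m3 : (q : 𝓞 K) ∈ Ideal.span {(q : 𝓞 K), r + (-1 : ℤ) * w} := Ideal.subset_span (by simp)
      have m4 : (r + (-1 : ℤ) * w : 𝓞 K) ∈ Ideal.span {(q : 𝓞 K), r + (-1 : ℤ) * w} :=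
        Ideal.subset_span (by simp)
      have key := add_mem (add_mem (Ideal.mul_mem_left _ (a : 𝓞 K) (Ideal.mul_mem_mul m1 m4))
        (Ideal.mul_mem_left _ (a : 𝓞 K) (Ideal.mul_mem_mul m2 m3)))
        (Ideal.mul_mem_left _ (b : 𝓞 K) (Ideal.mul_mem_mul m1 m3))
      rw [← e] at key
      exact key
  have hnm := congrArg Ideal.absNorm hprod
  rw [map_mul, int_norm n w hN] at hnm
  refine ⟨Ideal.span {(q : 𝓞 K), r + (1 : ℤ) * w}, ?_⟩
  obtain ⟨i, hi, hi'⟩ := (Nat.dvd_prime_pow hq).mp ⟨_, hnm.symm⟩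
  have h1 := hntop 1 (Or.inl rfl)
  have h2 := hntop (-1) (Or.inr rfl)
  interval_cases i
  · simp only [pow_zero] at hi'; exact absurd hi' h1
  · simpa using hi'
  · rw [hi'] at hnm
    have : q ^ 2 ≠ 0 := pow_ne_zero _ hq.ne_zero
    exact absurd ((mul_eq_left₀ this).mp hnm) h2

theorem n_one (w : 𝓞 K) (hw : w ^ 2 = -1)
    (hcoord : ∀ α : 𝓞 K, ∃ x y : ℤ, α = x + y * w) (c : ClassGroup (𝓞 K)) : c = 1 := by
  let f : GaussianInt →+* 𝓞 K := Zsqrtd.lift ⟨w, by rw [← sq, hw]; simp⟩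
  have hf : Function.Surjective f := by
    intro α
    obtain ⟨x, y, rfl⟩ := hcoord α
    exact ⟨⟨x, y⟩, rfl⟩
  have : IsPrincipalIdealRing (𝓞 K) := IsPrincipalIdealRing.of_surjective f hf
  obtain ⟨I, rfl⟩ := ClassGroup.mk0_surjective c
  exact (ClassGroup.mk0_eq_one_iff I.2).mpr (IsPrincipalIdealRing.principal _)

theorem prod_rep (X Y : ℕ → ℕ) (S : Finset ℕ)
    (h : ∀ q ∈ S, q % 8 = 1 ∧ 0 < X q ∧ (q : ℤ) = (X q : ℤ) ^ 2 - 32 * (Y q : ℤ) ^ 2) :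
    ∃ U V : ℤ, 0 < U ∧ 0 ≤ V ∧ ((∏ q ∈ S, q : ℕ) : ℤ) = U ^ 2 - 32 * V ^ 2 ∧
      ((∑ q ∈ S, if X q % 4 = 3 then 1 else 0) % 2 = 1 ∧ U % 4 = 3 ∨
       (∑ q ∈ S, if X q % 4 = 3 then 1 else 0) % 2 = 0 ∧ U % 4 = 1) := by
  induction S using Finset.induction_on with
  | empty => exact ⟨1, 0, by norm_num, le_refl _, by simp, Or.inr (by simp)⟩
  | insert p S hp ih =>
    obtain ⟨U, V, hU, hV, hUV, hm⟩ := ih (fun q hq => h q (Finset.mem_insert_of_mem hq))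
    obtain ⟨h8, hX, hpXY⟩ := h p (Finset.mem_insert_self _ _)
    refine ⟨X p * U + 32 * (Y p * V), X p * V + Y p * U, by positivity, by positivity, ?_, ?_⟩
    · rw [Finset.prod_insert hp]
      push_cast at hUV ⊢
      rw [hUV, hpXY]; ring
    · rw [Finset.sum_insert hp]
      have hodd : X p % 4 = 1 ∨ X p % 4 = 3 := by
        have : (X p : ℤ) % 2 = 1 := by
          rcases Int.even_or_odd' (X p : ℤ) with ⟨u, hu | hu⟩
          · rw [hu] at hpXY; ring_nf at hpXY; omega
          · omega
        omega
      have hmul : (X p * U + 32 * (Y p * V)) % 4 = ((X p : ℤ) % 4 * (U % 4)) % 4 := by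
        rw [← Int.mul_emod]; omega
      rw [hmul]
      rcases hodd with ho | ho <;> rcases hm with ⟨h1, h2⟩ | ⟨h1, h2⟩
      · left; rw [h2, show (X p : ℤ) % 4 = 1 by omega, if_neg (by omega)]; omega
      · right; rw [h2, show (X p : ℤ) % 4 = 1 by omega, if_neg (by omega)]; omega
      · right; rw [h2, show (X p : ℤ) % 4 = 3 by omega, if_pos ho]; omega
      · left; rw [h2, show (X p : ℤ) % 4 = 3 by omega, if_pos ho]; omega

end ideals
open scoped nonZeroDivisors

theorem mk0_span {K : Type} [Field K] [NumberField K] (I : (Ideal (𝓞 K))⁰) (a : 𝓞 K)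
    (h : (I : Ideal (𝓞 K)) = Ideal.span {a}) : ClassGroup.mk0 I = 1 :=
  (ClassGroup.mk0_eq_one_iff I.2).mpr ⟨⟨a, h⟩⟩


set_option maxHeartbeats 1000000 in
/-- for squarefree `n` with all prime factors `≡ 1 (mod 8)` and `h₄(n) = 1`
(the group `A[2] ∩ 2A` has order `2`), the sum `Σ_{p ∣ n} δ_p` is odd iff `h₈(n) = 0`
(the group `A[2] ∩ 4A` is trivial), where `δ_p = 1` iff `x_p ≡ 3 (mod 4)` for a
representation `p = x_p² − 32y_p²` in positive integers. -/
theorem stmt_16 (n : ℕ) (hnpos : 0 < n) (hnsf : Squarefree n)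
    (hpf : ∀ q : ℕ, q.Prime → q ∣ n → q % 8 = 1)
    (K : Type) [Field K] [NumberField K] (hdeg : Module.finrank ℚ K = 2)
    (s : K) (hs : s ^ 2 = -(n : K))
    (h4 : Nat.card {c : ClassGroup (𝓞 K) // c ^ 2 = 1 ∧ ∃ b, c = b ^ 2} = 2)
    (X Y : ℕ → ℕ)
    (hXY : ∀ q ∈ n.primeFactors, 0 < X q ∧ 0 < Y q ∧
      (q : ℤ) = (X q : ℤ) ^ 2 - 32 * (Y q : ℤ) ^ 2) :
    Odd (∑ q ∈ n.primeFactors, if X q % 4 = 3 then 1 else 0) ↔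
      Nat.card {c : ClassGroup (𝓞 K) // c ^ 2 = 1 ∧ ∃ b, c = b ^ 4} = 1 := by
  have hn8 : n % 8 = 1 := prod_mod8 n hnpos.ne' hpf
  -- the element w = √-n and coordinates
  obtain ⟨w, hws⟩ : ∃ w : 𝓞 K, algebraMap (𝓞 K) K w = s := by
    have hint : IsIntegral ℤ s := by
      apply IsIntegral.of_pow (n := 2) (by norm_num)
      rw [hs]
      exact (isIntegral_algebraMap (R := ℤ) (A := K) (x := (n : ℤ))).neg |> fun h => by simpa using h
    exact ⟨⟨s, hint⟩, rfl⟩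
  have hw : w ^ 2 = -(n : 𝓞 K) := by
    apply RingOfIntegers.coe_injective
    rw [map_pow, hws, hs]; simp
  have hcoord := coord_int hdeg n hnpos hnsf hn8 s hs w hws
  have hN := absNorm_int hdeg n hnpos s hs w hws
  -- n ≠ 1
  have hn1 : n ≠ 1 := by
    rintro rfl
    have hall := n_one w (by simpa using hw) hcoord
    have : Subsingleton {c : ClassGroup (𝓞 K) // c ^ 2 = 1 ∧ ∃ b, c = b ^ 2} :=
      ⟨fun a b => Subtype.ext ((hall a.1).trans (hall b.1).symm)⟩
    have := Finite.card_le_one_iff_subsingleton.mpr this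
    omega
  -- representation of n
  obtain ⟨U, V, hU, hV, hUV, hmod⟩ := prod_rep X Y n.primeFactors (fun q hq =>
    ⟨hpf q (Nat.prime_of_mem_primeFactors hq) (Nat.dvd_of_mem_primeFactors hq),
      (hXY q hq).1, (hXY q hq).2.2⟩)
  rw [Nat.prod_primeFactors_of_squarefree hnsf] at hUV
  have hUodd : U % 2 = 1 := by omega
  obtain ⟨z, hz⟩ : ∃ z : ℕ, (z : ℤ) = U + 4 * V := ⟨(U + 4 * V).toNat, by omega⟩
  set x : ℤ := U + 8 * V with hx
  have hxz : x ^ 2 + n = 2 * (z : ℤ) ^ 2 := by rw [hz, hx, hUV]; ring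
  have hcop : IsCoprime x (z : ℤ) := by
    rw [Int.isCoprime_iff_gcd_eq_one]
    by_contra hg
    obtain ⟨r, hr, hrg⟩ := Nat.exists_prime_and_dvd hg
    have hr1 : (r : ℤ) ∣ x := (Int.natCast_dvd_natCast.mpr hrg).trans (Int.gcd_dvd_left ..)
    have hr2 : (r : ℤ) ∣ z := (Int.natCast_dvd_natCast.mpr hrg).trans (Int.gcd_dvd_right ..)
    have h1 : (r : ℤ) * r ∣ n := by
      have : (n : ℤ) = 2 * (z * z) - x * x := by linarith
      rw [this]
      exact dvd_sub ((mul_dvd_mul hr2 hr2).mul_left 2) (mul_dvd_mul hr1 hr1)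
    exact hr.one_lt.ne' (Nat.isUnit_iff.mp (hnsf r (by exact_mod_cast h1)))
  have htb := tb n w hw x z (by omega) (by omega) hcop hxz
  have htsq := t_sq n hn8 w hw
  have htn := t_norm n hn8 w hw hN
  set T : Ideal (𝓞 K) := Ideal.span {2, 1 + w} with hT
  set Bi : Ideal (𝓞 K) := Ideal.span {((z : ℤ) : 𝓞 K), x + w} with hBi
  have hbn : Ideal.absNorm Bi = z := by
    have h1 := congrArg Ideal.absNorm htb
    have h2 := hN x 1
    simp only [Int.cast_one, one_mul] at h2
    rw [← h1] at h2
    simp only [map_mul, map_pow, htn] at h2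
    push_cast at h2
    have h3 : (Ideal.absNorm Bi : ℤ) ^ 2 = (z : ℤ) ^ 2 := by linarith
    have h4 : Ideal.absNorm Bi ^ 2 = z ^ 2 := by exact_mod_cast h3
    exact Nat.pow_left_injective (n := 2) (by norm_num) h4
  have hT0 : T ∈ (Ideal (𝓞 K))⁰ := by
    apply mem_nonZeroDivisors_of_ne_zero
    intro h; rw [h] at htn; simp at htn
  have hB0 : Bi ∈ (Ideal (𝓞 K))⁰ := by
    apply mem_nonZeroDivisors_of_ne_zero
    intro h; rw [h] at hbn; simp at hbn; omega
  set t := ClassGroup.mk0 (⟨T, hT0⟩ : (Ideal (𝓞 K))⁰) with ht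
  set b := ClassGroup.mk0 (⟨Bi, hB0⟩ : (Ideal (𝓞 K))⁰) with hb
  have ht2 : t ^ 2 = 1 := by
    have h1 := mk0_span ((⟨T, hT0⟩ : (Ideal (𝓞 K))⁰) ^ 2) 2
      (by rw [SubmonoidClass.coe_pow]; exact htsq)
    rw [map_pow] at h1
    exact h1
  have htb1 : t * b ^ 2 = 1 := by
    have h1 := mk0_span ((⟨T, hT0⟩ : (Ideal (𝓞 K))⁰) * (⟨Bi, hB0⟩ : (Ideal (𝓞 K))⁰) ^ 2)
      ((x : 𝓞 K) + w) (by rw [Submonoid.coe_mul, SubmonoidClass.coe_pow]; exact htb)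
    rw [map_mul, map_pow] at h1
    exact h1
  have htb2 : t = b ^ 2 := by
    have h1 : t * t = t * b ^ 2 := by rw [htb1, ← sq, ht2]
    exact mul_left_cancel h1
  have ht1 : t ≠ 1 := by
    intro h
    have hpr := (ClassGroup.mk0_eq_one_iff hT0).mp h
    obtain ⟨α, hα⟩ := hpr.principal
    obtain ⟨a, c, rfl⟩ := hcoord α
    have h1 := hN a c
    have h2 : T = Ideal.span {(a : 𝓞 K) + c * w} := hα
    rw [← h2, htn] at h1
    push_cast at h1
    have hn : (9 : ℤ) ≤ n := by omega
    by_cases hc : c = 0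
    · subst hc
      have h3 : a ^ 2 = 2 := by linarith
      have := sq_mod8 a
      omega
    · have : 1 ≤ c ^ 2 := by
        have := pow_pos (abs_pos.mpr hc) 2
        rw [sq_abs] at this; omega
      nlinarith [sq_nonneg a]
  -- odd representatives
  have hodd : ∀ c : ClassGroup (𝓞 K), ∃ J : (Ideal (𝓞 K))⁰,
      Ideal.absNorm (J : Ideal (𝓞 K)) % 2 = 1 ∧ ClassGroup.mk0 J = c := by
    intro c
    obtain ⟨I, rfl⟩ := ClassGroup.mk0_surjective c
    refine odd_rep n hn8 w hw hN hT0 ⟨⟨Bi, hB0⟩ ^ 2, ?_, ?_⟩ I.1 I.2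
    · rw [SubmonoidClass.coe_pow, map_pow, Nat.pow_mod, hbn, show z % 2 = 1 by omega]
    · rw [map_pow]; exact htb2.symm
  -- the subgroup of classes of norm 1 mod 4
  let H : Subgroup (ClassGroup (𝓞 K)) :=
    { carrier := {c | ∃ J : (Ideal (𝓞 K))⁰,
        Ideal.absNorm (J : Ideal (𝓞 K)) % 4 = 1 ∧ ClassGroup.mk0 J = c}
      one_mem' := ⟨1, by simp, map_one _⟩
      mul_mem' := by
        rintro _ _ ⟨I, hI, rfl⟩ ⟨J, hJ, rfl⟩
        exact ⟨I * J, by rw [Submonoid.coe_mul, map_mul, Nat.mul_mod, hI, hJ], map_mul _ _ _⟩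
      inv_mem' := by
        rintro _ ⟨I, hI, rfl⟩
        refine ⟨I ^ (Nat.card (ClassGroup (𝓞 K)) - 1), ?_, ?_⟩
        · rw [SubmonoidClass.coe_pow, map_pow, Nat.pow_mod, hI]; simp
        · rw [map_pow]
          apply eq_inv_of_mul_eq_one_left
          rw [← pow_succ, Nat.sub_add_cancel Nat.card_pos, pow_card_eq_one'] }
  have hHtop : H ≠ ⊤ := by
    intro htop
    obtain ⟨q, hq, hq4, r, hr⟩ := exists_q n hn1 hnsf hn8 hpf
    obtain ⟨J, hJ⟩ := q_ideal n hnpos w hw hcoord hN q hq (by omega)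
      (fun h => by have := hpf q hq h; omega) r hr
    have hJ0 : J ∈ (Ideal (𝓞 K))⁰ := by
      apply mem_nonZeroDivisors_of_ne_zero
      intro h; rw [h] at hJ; simp at hJ; omega
    have hmem : ClassGroup.mk0 (⟨J, hJ0⟩ : (Ideal (𝓞 K))⁰) ∈ H := by rw [htop]; trivial
    obtain ⟨I, hI, hIJ⟩ := hmem
    exact noncoexist n hn8 w hcoord hN I ⟨J, hJ0⟩ hIJ hI (by rw [hJ]; exact hq4)
  have hHsq : ∀ g, g ^ 2 ∈ H := by
    intro g
    obtain ⟨J, hJ, rfl⟩ := hodd g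
    refine ⟨J ^ 2, ?_, map_pow _ _ _⟩
    rw [SubmonoidClass.coe_pow, map_pow, Nat.pow_mod]
    have : Ideal.absNorm (J : Ideal (𝓞 K)) % 4 = 1 ∨ Ideal.absNorm (J : Ideal (𝓞 K)) % 4 = 3 := by
      omega
    rcases this with h | h <;> rw [h]
  have hHtor : ∀ g, g ^ 2 = 1 → g ∈ H := fun g hg =>
    torsion n hnsf hn8 hpf w hw hcoord hN g hg (hodd g)
  rw [grp_lemma h4 H hHtop hHsq hHtor t b ht1 ht2 htb2, Nat.odd_iff]
  rcases hmod with ⟨hm1, hm2⟩ | ⟨hm1, hm2⟩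
  · refine iff_of_true hm1 ?_
    rintro ⟨I, hI, hIb⟩
    exact noncoexist n hn8 w hcoord hN I ⟨Bi, hB0⟩ hIb hI
      (by change Ideal.absNorm Bi % 4 = 3; rw [hbn]; omega)
  · refine iff_of_false (by omega) ?_
    rw [not_not]
    exact ⟨⟨Bi, hB0⟩, by change Ideal.absNorm Bi % 4 = 1; rw [hbn]; omega, rfl⟩
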